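/- arXiv:1805.03163 — 2 statements merged into one kernel-verified Lean document; each statement's English description precedes it below -/
import Mathlib

section
/- Let n ≥ 2, let (F_i)_{i : Fin n} be a family of monotone coordinate-update maps on Fin n → Bool, let π be a permutation of Fin n, and let F_π := F_{π(n-1)} ∘ ⋯ ∘ F_{π(0)}. If X is a periodic point of F_π (F_π^[p] X = X for some p ≥ 1), then the orbit {Y | ∃ k, F_π^[k] X = Y} has cardinality strictly less than the binomial coefficient choose(n, ⌊n/2⌋). In other words, the size of any limit cycle of a monotone SDS on n ≥ 2 vertices is strictly less than choose(n, ⌊n/2⌋). -/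
/-- The SDS map `F_{π(n-1)} ∘ ⋯ ∘ F_{π(1)} ∘ F_{π(0)}`: vertex `π 0` is updated first. -/
def seqComp {n : ℕ} (F : Fin n → (Fin n → Bool) → (Fin n → Bool))
    (π : Equiv.Perm (Fin n)) (X : Fin n → Bool) : Fin n → Bool :=
  (List.finRange n).foldl (fun Y i => F (π i) Y) X

/-!
A monotone map has no comparable distinct points on a periodic orbit, so a limit cycle is an
antichain of states and Sperner's theorem bounds its size by the middle binomial coefficient.
Suppose that it has that size. The full map is order-reflecting on the cycle `A`, hence so is the
first update `f`, at vertex `i` say. If `f` moved some `x ∈ A`, then no other `y ∈ A` would be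
comparable to `x` away from `i`: depending on the values of `x` and `f x` at `i`, one of the pairs
`(x, y)` and `(f x, f y)` would be comparable. The two states `lo < hi` which agree with `x` away
from `i` are then incomparable to all of `A \ {x}`. If `lo` is the least state, `A \ {x}` is empty;
otherwise some maximal chain passes through `hi` and not through `lo`, and it misses the antichain
`A \ {x} ∪ {lo}`, so the counting of maximal chains which proves Sperner's theorem leaves a strict
inequality. Either way `A` is too small. So the first update fixes `A` pointwise, then so does the
next one, and so on: the cycle is a single fixed point.
-/

open Finset Function

section Sperner

variable {α : Type*} [Fintype α]

/-- A numbering of which no member of `A` is a prefix is a maximal chain avoiding `A`. -/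
theorem sum_inv_choose_lt_one_of_forall_not_isPrefix {A : Finset (Finset α)}
    (hA : IsAntichain (· ⊆ ·) (A : Set (Finset α))) {f : Numbering α}
    (hf : ∀ s ∈ A, ¬ f.IsPrefix s) :
    ∑ s ∈ A, ((Fintype.card α).choose #s : ℚ≥0)⁻¹ < 1 := by
  classical
  have hdisj : (A : Set (Finset α)).PairwiseDisjoint Numbering.prefixed := fun s hs t ht hst ↦
    Numbering.disjoint_prefixed_prefixed (hA hs ht hst) (hA ht hs hst.symm)
  have hunion : A.biUnion Numbering.prefixed ≠ univ := fun h ↦ by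
    obtain ⟨s, hs, hfs⟩ := mem_biUnion.1 (h ▸ mem_univ f)
    exact hf s hs (Numbering.mem_prefixed.1 hfs)
  have : Nonempty (Numbering α) := ⟨f⟩
  calc ∑ s ∈ A, ((Fintype.card α).choose #s : ℚ≥0)⁻¹
      = (A.biUnion Numbering.prefixed).dens := by
        rw [dens, card_biUnion hdisj, Nat.cast_sum, sum_div]
        simp only [← dens_eq_card_div_card, Numbering.dens_prefixed]
    _ < 1 := dens_le_one.lt_of_ne (dens_ne_one.2 hunion)

theorem card_lt_choose_half_of_forall_not_isPrefix {A : Finset (Finset α)}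
    (hA : IsAntichain (· ⊆ ·) (A : Set (Finset α))) {f : Numbering α}
    (hf : ∀ s ∈ A, ¬ f.IsPrefix s) :
    #A < (Fintype.card α).choose (Fintype.card α / 2) := by
  have hpos : 0 < ((Fintype.card α).choose (Fintype.card α / 2) : ℚ≥0) :=
    Nat.cast_pos.2 <| Nat.choose_pos (Nat.div_le_self _ _)
  have hsum := calc
    ∑ s ∈ A, ((Fintype.card α).choose (Fintype.card α / 2) : ℚ≥0)⁻¹
      ≤ ∑ s ∈ A, ((Fintype.card α).choose #s : ℚ≥0)⁻¹ := by
        gcongr with s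
        · exact mod_cast Nat.choose_pos s.card_le_univ
        · exact Nat.choose_le_middle _ _
    _ < 1 := sum_inv_choose_lt_one_of_forall_not_isPrefix hA hf
  rw [sum_const, nsmul_eq_mul, ← div_eq_mul_inv, div_lt_one hpos] at hsum
  exact_mod_cast hsum

theorem exists_numbering_isPrefix (t : Finset α) : ∃ f : Numbering α, f.IsPrefix t := by
  classical
  have hpos : 0 < #(Numbering.prefixed t) := by rw [Numbering.card_prefixed]; positivity
  obtain ⟨f, hf⟩ := card_pos.1 hpos
  exact ⟨f, Numbering.mem_prefixed.1 hf⟩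

theorem exists_numbering_isPrefix_not_isPrefix {s t : Finset α} (hs : s.Nonempty) (hst : s ⊂ t) :
    ∃ f : Numbering α, f.IsPrefix t ∧ ¬ f.IsPrefix s := by
  classical
  obtain ⟨f, hft⟩ := exists_numbering_isPrefix t
  by_cases hfs : f.IsPrefix s
  · obtain ⟨j, hj⟩ := hs
    obtain ⟨i, hit, his⟩ := exists_of_ssubset hst
    refine ⟨(Equiv.swap i j).trans f, fun x ↦ ?_, fun h ↦ ?_⟩
    · rw [Equiv.trans_apply, ← hft]
      by_cases hxi : x = i
      · simp [hxi, hit, hst.1 hj]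
      by_cases hxj : x = j
      · simp [hxj, hit, hst.1 hj]
      rw [Equiv.swap_apply_of_ne_of_ne hxi hxj]
    · have := (h j).1 hj
      rw [Equiv.trans_apply, Equiv.swap_apply_right, ← hfs] at this
      exact his this
  · exact ⟨f, hft, hfs⟩

theorem two_le_choose_half {n : ℕ} (hn : 2 ≤ n) : 2 ≤ n.choose (n / 2) :=
  calc 2 ≤ n.choose 1 := by rwa [Nat.choose_one_right]
    _ ≤ n.choose (n / 2) := Nat.choose_le_middle 1 n

theorem card_add_one_lt_choose_half_of_ssubset (hα : 2 ≤ Fintype.card α) {B : Finset (Finset α)}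
    (hB : IsAntichain (· ⊆ ·) (B : Set (Finset α))) {s t : Finset α} (hst : s ⊂ t)
    (hsB : ∀ u ∈ B, ¬ s ⊆ u) (htB : ∀ u ∈ B, ¬ u ⊆ t) :
    #B + 1 < (Fintype.card α).choose (Fintype.card α / 2) := by
  classical
  obtain rfl | hs := s.eq_empty_or_nonempty
  · have hempty : B = ∅ := eq_empty_of_forall_notMem fun u hu ↦ hsB u hu (empty_subset u)
    rw [hempty]
    exact two_le_choose_half hα
  obtain ⟨f, hft, hfs⟩ := exists_numbering_isPrefix_not_isPrefix hs hst
  have hanti : IsAntichain (· ⊆ ·) (insert s B : Set (Finset α)) :=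
    hB.insert (fun u hu _ hus ↦ htB u hu (hus.trans hst.1)) fun u hu _ ↦ hsB u hu
  have havoid : ∀ u ∈ insert s B, ¬ f.IsPrefix u := by
    refine forall_mem_insert _ _ _ |>.2 ⟨hfs, fun u hu hfu ↦ ?_⟩
    obtain hut | htu := Nat.le_total #u #t
    · exact htB u hu (hfu.subset_of_card_le_card hft hut)
    · exact hsB u hu (hst.1.trans (hft.subset_of_card_le_card hfu htu))
  rw [← card_insert_of_notMem fun hs ↦ hsB s hs subset_rfl]
  exact card_lt_choose_half_of_forall_not_isPrefix (by rwa [coe_insert]) havoid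

end Sperner

section CoordinateUpdate

variable {ι : Type*}

/-- The set of vertices in state `true`, as an order embedding of the states into the finite
sets of vertices. -/
def trueVertices [Fintype ι] : (ι → Bool) ↪o Finset ι :=
  OrderEmbedding.ofMapLEIff (fun x ↦ univ.filter (x ·)) fun x y ↦ by
    simp [subset_iff, Pi.le_def, Bool.le_iff_imp]

theorem card_add_one_lt_choose_half_of_lt [Fintype ι] (hι : 2 ≤ Fintype.card ι)
    {B : Finset (ι → Bool)} (hB : IsAntichain (· ≤ ·) (B : Set (ι → Bool))) {x y : ι → Bool}
    (hxy : x < y) (hxB : ∀ z ∈ B, ¬ x ≤ z) (hyB : ∀ z ∈ B, ¬ z ≤ y) :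
    #B + 1 < (Fintype.card ι).choose (Fintype.card ι / 2) := by
  classical
  have hanti : IsAntichain (· ⊆ ·) (B.map trueVertices.toEmbedding : Set (Finset ι)) := by
    rw [coe_map]
    exact hB.image_embedding trueVertices
  rw [← card_map trueVertices.toEmbedding]
  refine card_add_one_lt_choose_half_of_ssubset hι hanti (trueVertices.lt_iff_lt.2 hxy) ?_ ?_
  · exact forall_mem_map.2 fun z hz ↦ trueVertices.le_iff_le.not.2 (hxB z hz)
  · exact forall_mem_map.2 fun z hz ↦ trueVertices.le_iff_le.not.2 (hyB z hz)

theorem le_of_apply_le_of_forall_ne {β : ι → Type*} [∀ i, LE (β i)] {x y : ∀ i, β i} {i : ι}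
    (hi : x i ≤ y i) (h : ∀ j ≠ i, x j ≤ y j) : x ≤ y := fun j ↦ by
  obtain rfl | hj := eq_or_ne j i
  exacts [hi, h j hj]

/-- `f` is a coordinate-update map at `i`: it changes no other coordinate. -/
def IsCoordinateUpdate (i : ι) (f : (ι → Bool) → (ι → Bool)) : Prop :=
  ∀ (x : ι → Bool) (j : ι), j ≠ i → f x j = x j

namespace IsCoordinateUpdate

variable {i : ι} {f : (ι → Bool) → (ι → Bool)} {x y : ι → Bool}

theorem apply_ne (hf : IsCoordinateUpdate i f) (hx : f x ≠ x) : f x i ≠ x i := fun h ↦ hx <| by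
  funext j
  obtain rfl | hj := eq_or_ne j i
  exacts [h, hf x j hj]

-- One of `x i` and `f x i` is `false`.
theorem le_or_map_le (hf : IsCoordinateUpdate i f) (hx : f x ≠ x) (h : ∀ j ≠ i, x j ≤ y j) :
    x ≤ y ∨ f x ≤ f y := by
  have hfh : ∀ j ≠ i, f x j ≤ f y j := fun j hj ↦ by simpa only [hf _ j hj] using h j hj
  cases hxi : x i
  · exact .inl <| le_of_apply_le_of_forall_ne (hxi ▸ Bool.false_le _) h
  · have hfxi : f x i = false := by simpa [hxi] using hf.apply_ne hx
    exact .inr <| le_of_apply_le_of_forall_ne (hfxi ▸ Bool.false_le _) hfh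

theorem ge_or_map_ge (hf : IsCoordinateUpdate i f) (hx : f x ≠ x) (h : ∀ j ≠ i, y j ≤ x j) :
    y ≤ x ∨ f y ≤ f x := by
  have hfh : ∀ j ≠ i, f y j ≤ f x j := fun j hj ↦ by simpa only [hf _ j hj] using h j hj
  cases hxi : x i
  · have hfxi : f x i = true := by simpa [hxi] using hf.apply_ne hx
    exact .inr <| le_of_apply_le_of_forall_ne (hfxi ▸ Bool.le_true _) hfh
  · exact .inl <| le_of_apply_le_of_forall_ne (hxi ▸ Bool.le_true _) h

theorem apply_eq_self_of_choose_half_le_card [Fintype ι] (hι : 2 ≤ Fintype.card ι)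
    (hf : IsCoordinateUpdate i f) {A : Finset (ι → Bool)}
    (hA : IsAntichain (· ≤ ·) (A : Set (ι → Bool)))
    (hfA : ∀ x ∈ A, ∀ y ∈ A, f x ≤ f y → x = y)
    (hcard : (Fintype.card ι).choose (Fintype.card ι / 2) ≤ #A) (hx : x ∈ A) : f x = x := by
  classical
  by_contra hfx
  let lo := update x i false
  let hi := update x i true
  have hlohi : lo < hi := update_lt_update_iff.2 Bool.false_lt_true
  have hlo : ∀ y ∈ A.erase x, ¬ lo ≤ y := fun y hy hle ↦ by
    obtain ⟨hyx, hyA⟩ := mem_erase.1 hy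
    rcases hf.le_or_map_le hfx (update_le_iff.1 hle).2 with h | h
    exacts [hyx (hA.eq' hyA hx h), hyx (hfA x hx y hyA h).symm]
  have hhi : ∀ y ∈ A.erase x, ¬ y ≤ hi := fun y hy hle ↦ by
    obtain ⟨hyx, hyA⟩ := mem_erase.1 hy
    rcases hf.ge_or_map_ge hfx (le_update_iff.1 hle).2 with h | h
    exacts [hyx (hA.eq hyA hx h), hyx (hfA y hyA x hx h)]
  have hlt := card_add_one_lt_choose_half_of_lt hι
    (hA.subset (coe_subset.2 (erase_subset x A))) hlohi hlo hhi
  rw [card_erase_add_one hx] at hlt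
  exact hlt.not_ge hcard

end IsCoordinateUpdate

/-- The sequential dynamical system map of an update schedule `w`, which may be any word in the
vertices: the first letter of `w` is updated first. -/
def wordMap (F : ι → (ι → Bool) → (ι → Bool)) (w : List ι) (x : ι → Bool) : ι → Bool :=
  w.foldl (fun y i ↦ F i y) x

theorem monotone_wordMap {F : ι → (ι → Bool) → (ι → Bool)} (hmono : ∀ i, Monotone (F i))
    (w : List ι) : Monotone (wordMap F w) := by
  induction w with
  | nil => exact monotone_id
  | cons i w ih => exact ih.comp (hmono i)

theorem wordMap_eq_self_of_choose_half_le_card [Fintype ι] (hι : 2 ≤ Fintype.card ι)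
    {F : ι → (ι → Bool) → (ι → Bool)} (hF : ∀ i, IsCoordinateUpdate i (F i))
    (hmono : ∀ i, Monotone (F i)) {A : Finset (ι → Bool)}
    (hA : IsAntichain (· ≤ ·) (A : Set (ι → Bool)))
    (hcard : (Fintype.card ι).choose (Fintype.card ι / 2) ≤ #A) (w : List ι)
    (hwA : ∀ x ∈ A, ∀ y ∈ A, wordMap F w x ≤ wordMap F w y → x = y) :
    ∀ x ∈ A, wordMap F w x = x := by
  induction w with
  | nil => exact fun _ _ ↦ rfl
  | cons i w ih =>
    have hfirst : ∀ x ∈ A, F i x = x := fun x hx ↦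
      (hF i).apply_eq_self_of_choose_half_le_card hι hA
        (fun x hx y hy h ↦ hwA x hx y hy (monotone_wordMap hmono w h)) hcard hx
    have hcons : ∀ x ∈ A, wordMap F (i :: w) x = wordMap F w x := fun x hx ↦
      congrArg (wordMap F w) (hfirst x hx)
    intro x hx
    rw [hcons x hx]
    refine ih (fun x hx y hy h ↦ hwA x hx y hy ?_) x hx
    rwa [hcons x hx, hcons y hy]

end CoordinateUpdate

section PeriodicOrbit

variable {α : Type*} {f : α → α} {x : α}

theorem iterate_mem_periodicPts (hx : x ∈ periodicPts f) (k : ℕ) : f^[k] x ∈ periodicPts f :=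
  (bijOn_periodicPts f).mapsTo.iterate k hx

variable [PartialOrder α]

theorem iterate_eq_self_of_monotone_of_le (hf : Monotone f) (hx : x ∈ periodicPts f) {k : ℕ}
    (hle : x ≤ f^[k] x) : f^[k] x = x := by
  obtain ⟨p, hp, hpx⟩ := hx
  refine hle.antisymm' ?_
  calc f^[k] x ≤ (f^[k])^[p] x := (hf.iterate k).monotone_iterate_of_le_map hle hp
    _ = x := (hpx.iterate k).eq

theorem isAntichain_range_iterate_of_monotone (hf : Monotone f) (hx : x ∈ periodicPts f) :
    IsAntichain (· ≤ ·) (Set.range (f^[·] x)) := by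
  rintro _ ⟨a, rfl⟩ _ ⟨b, rfl⟩ hne hle
  have hxa := iterate_mem_periodicPts hx a
  obtain ⟨c, hc⟩ : ∃ c, f^[c] (f^[a] x) = f^[b] x := by
    rw [← mem_periodicOrbit_iff hxa, periodicOrbit_apply_iterate_eq hx]
    exact iterate_mem_periodicOrbit hx b
  dsimp only at hne hle
  rw [← hc] at hne hle
  exact hne (iterate_eq_self_of_monotone_of_le hf hxa hle).symm

theorem eq_of_map_le_map_of_mem_range_iterate (hf : Monotone f) (hx : x ∈ periodicPts f) :
    ∀ y ∈ Set.range (f^[·] x), ∀ z ∈ Set.range (f^[·] x), f y ≤ f z → y = z := by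
  rintro _ ⟨a, rfl⟩ _ ⟨b, rfl⟩ hle
  refine (bijOn_periodicPts f).injOn (iterate_mem_periodicPts hx a)
    (iterate_mem_periodicPts hx b) ?_
  exact (isAntichain_range_iterate_of_monotone hf hx).eq
    ⟨a + 1, iterate_succ_apply' f a x⟩ ⟨b + 1, iterate_succ_apply' f b x⟩ hle

end PeriodicOrbit

theorem stmt_12_general {ι : Type*} [Fintype ι] (hι : 2 ≤ Fintype.card ι)
    {F : ι → (ι → Bool) → (ι → Bool)} (hF : ∀ i, IsCoordinateUpdate i (F i))
    (hmono : ∀ i, Monotone (F i)) (w : List ι) {x : ι → Bool}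
    (hx : x ∈ periodicPts (wordMap F w)) :
    {y | ∃ k : ℕ, (wordMap F w)^[k] x = y}.ncard <
      (Fintype.card ι).choose (Fintype.card ι / 2) := by
  have hwmono := monotone_wordMap hmono w
  obtain ⟨A, hA⟩ := (Set.range ((wordMap F w)^[·] x)).toFinite.exists_finset_coe
  change (Set.range ((wordMap F w)^[·] x)).ncard < _
  by_contra! hcard
  have hanti := isAntichain_range_iterate_of_monotone hwmono hx
  have hreflect := eq_of_map_le_map_of_mem_range_iterate hwmono hx
  rw [← hA] at hanti hreflect
  rw [← hA, Set.ncard_coe_finset] at hcard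
  have hmem : ∀ k, (wordMap F w)^[k] x ∈ A := fun k ↦ mem_coe.1 <| hA ▸ ⟨k, rfl⟩
  have hfix : wordMap F w x = x :=
    wordMap_eq_self_of_choose_half_le_card hι hF hmono hanti hcard w hreflect x (hmem 0)
  have hsub : (A : Set (ι → Bool)) ⊆ {x} := by
    rw [hA]
    rintro _ ⟨k, rfl⟩
    exact iterate_fixed hfix k
  have hone : #A ≤ 1 := card_le_card (coe_subset_singleton.1 hsub)
  exact (hcard.trans hone).not_gt (two_le_choose_half hι)

theorem stmt_12 {n : ℕ} (hn : 2 ≤ n)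
    (F : Fin n → (Fin n → Bool) → (Fin n → Bool))
    (hupd : ∀ (i : Fin n) (X : Fin n → Bool) (j : Fin n), j ≠ i → F i X j = X j)
    (hmono : ∀ i : Fin n, Monotone (F i))
    (π : Equiv.Perm (Fin n)) (X : Fin n → Bool)
    (p : ℕ) (hp : 1 ≤ p) (hper : (seqComp F π)^[p] X = X) :
    ({Y : Fin n → Bool | ∃ k : ℕ, (seqComp F π)^[k] X = Y}).ncard <
      Nat.choose n (n / 2) := by
  have hword : seqComp F π = wordMap F ((List.finRange n).map π) := by
    funext Y
    simp only [seqComp, wordMap, List.foldl_map]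
  rw [hword] at hper ⊢
  simpa only [Fintype.card_fin] using stmt_12_general (by rwa [Fintype.card_fin]) hupd hmono
    ((List.finRange n).map π) (mk_mem_periodicPts hp hper)
end

section
/- Let a, b ≥ 1, put n = a + b, and let (F_i)_{i : Fin n} be a family of monotone coordinate-update maps on Fin n → Bool. Let U = {i : Fin n | i < a} and V = {i : Fin n | a ≤ i}, and assume F_i ∘ F_j = F_j ∘ F_i whenever i and j both lie in U or both lie in V (which holds for a bipartite dependency graph with parts U, V). Let F := F_{n-1} ∘ ⋯ ∘ F_1 ∘ F_0 (all of U updated first, then all of V). Then the number of states X : Fin n → Bool that are Garden-of-Eden states of F or reach a fixed point of F is at least 2^(a+1) + 2^(b+1) − 4. -/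
/-!
Write `F = H ∘ G`, where `G` updates the block `U` and `H` the complementary block. Both are
monotone, and idempotent because each is a composition of commuting idempotents. A state `X` that is
constant on one of the blocks is either a Garden-of-Eden state or comparable with `F X`; in the
second case its orbit is a monotone sequence in a finite poset, so it reaches a fixed point. The
states constant on at least one block are counted by inclusion-exclusion.
-/

open Function Set

section Orbits

variable {σ : Type*} [PartialOrder σ] {f : σ → σ} {x : σ}

theorem exists_isFixedPt_iterate_of_le_map [WellFoundedGT σ] (hf : Monotone f) (hx : x ≤ f x) :
    ∃ k : ℕ, IsFixedPt f (f^[k] x) := by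
  obtain ⟨k, hk⟩ :=
    WellFoundedGT.monotone_chain_condition ⟨fun k ↦ f^[k] x, hf.monotone_iterate_of_le_map hx⟩
  exact ⟨k, (iterate_succ_apply' f k x).symm.trans (hk (k + 1) k.le_succ).symm⟩

theorem exists_isFixedPt_iterate_of_map_le [WellFoundedLT σ] (hf : Monotone f) (hx : f x ≤ x) :
    ∃ k : ℕ, IsFixedPt f (f^[k] x) :=
  exists_isFixedPt_iterate_of_le_map (σ := σᵒᵈ) hf.dual hx

end Orbits

variable {ι α κ : Type*}

theorem le_of_eqOn_compl [Preorder α] {U : Set ι} {X Y : ι → α} (hXY : EqOn X Y Uᶜ)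
    (hle : ∀ i ∈ U, X i ≤ Y i) : X ≤ Y := fun i ↦ by
  by_cases hi : i ∈ U
  exacts [hle i hi, (hXY hi).le]

/-- A monotone idempotent self-map of the state space `ι → α` that changes only coordinates in the
block `U`. Updating pairwise commuting vertices of `U` one after the other has this form. -/
structure IsBlockUpdate [Preorder α] (U : Set ι) (f : (ι → α) → ι → α) : Prop where
  monotone : Monotone f
  idem : ∀ X, f (f X) = f X
  eqOn_compl : ∀ X, EqOn (f X) X Uᶜ

namespace IsBlockUpdate

section Preorder

variable [Preorder α] {U V : Set ι} {f g : (ι → α) → ι → α}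

protected theorem id : IsBlockUpdate U (id : (ι → α) → ι → α) :=
  ⟨monotone_id, fun _ ↦ rfl, fun X ↦ eqOn_refl X Uᶜ⟩

theorem mono (hf : IsBlockUpdate U f) (hUV : U ⊆ V) : IsBlockUpdate V f :=
  ⟨hf.monotone, hf.idem, fun X ↦ (hf.eqOn_compl X).mono (compl_subset_compl.2 hUV)⟩

theorem dual (hf : IsBlockUpdate U f) : IsBlockUpdate (α := αᵒᵈ) U f :=
  ⟨hf.monotone.dual, hf.idem, hf.eqOn_compl⟩

theorem comp (hf : IsBlockUpdate U f) (hg : IsBlockUpdate U g) (hfg : Function.Commute f g) :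
    IsBlockUpdate U (f ∘ g) where
  monotone := hf.monotone.comp hg.monotone
  idem X := by simp only [comp_apply, (hfg (g X)).symm, hg.idem, hf.idem]
  eqOn_compl X := (hf.eqOn_compl (g X)).trans (hg.eqOn_compl X)

theorem apply_eq_of_mem_range (hf : IsBlockUpdate U f) {X : ι → α} (hX : X ∈ range f) :
    f X = X := by
  obtain ⟨Y, rfl⟩ := hX
  exact hf.idem Y

end Preorder

-- If `f (f X) ≠ f X`, then `f` would interchange the comparable states `X` and `f X`.
theorem of_monotone_of_eqOn_compl_singleton {f : (ι → Bool) → ι → Bool} {i : ι}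
    (hmono : Monotone f) (hupd : ∀ X, EqOn (f X) X {i}ᶜ) : IsBlockUpdate {i} f := by
  refine ⟨hmono, fun X ↦ ?_, hupd⟩
  have le_of_apply_le {Y Z : ι → Bool} (hYZ : EqOn Y Z {i}ᶜ) (hi : Y i ≤ Z i) : Y ≤ Z :=
    le_of_eqOn_compl hYZ (by simpa using hi)
  have eq_of_apply_eq {Y Z : ι → Bool} (hYZ : EqOn Y Z {i}ᶜ) (hi : Y i = Z i) : Y = Z :=
    (le_of_apply_le hYZ hi.le).antisymm (le_of_apply_le hYZ.symm hi.ge)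
  have pigeonhole : ∀ x y z : Bool, y = x ∨ z = y ∨ z = x := by decide
  obtain h | h | h := pigeonhole (X i) (f X i) (f (f X) i)
  · exact congrArg f (eq_of_apply_eq (hupd X) h)
  · exact eq_of_apply_eq (hupd (f X)) h
  · have hswap : f (f X) = X := eq_of_apply_eq ((hupd (f X)).trans (hupd X)) h
    obtain hle | hle := le_total (X i) (f X i)
    · have hX : X ≤ f X := le_of_apply_le (hupd X).symm hle
      exact (hswap.trans_le hX).antisymm (hmono hX)
    · have hX : f X ≤ X := le_of_apply_le (hupd X) hle
      exact (hmono hX).antisymm (hX.trans_eq hswap.symm)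

end IsBlockUpdate

theorem commute_foldl {σ : Type*} {f : σ → σ} {F : κ → σ → σ} {l : List κ}
    (hf : ∀ k ∈ l, Function.Commute f (F k)) :
    Function.Commute f fun x ↦ l.foldl (fun y k ↦ F k y) x := by
  induction l with
  | nil => exact fun _ ↦ rfl
  | cons k l ih =>
    rw [List.forall_mem_cons] at hf
    exact (ih hf.2).comp_right hf.1

theorem IsBlockUpdate.foldl [Preorder α] {U : Set ι} {F : κ → (ι → α) → ι → α} {l : List κ}
    (hF : ∀ k ∈ l, IsBlockUpdate U (F k))
    (hcomm : ∀ k ∈ l, ∀ k' ∈ l, Function.Commute (F k) (F k')) :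
    IsBlockUpdate U fun X ↦ l.foldl (fun Y k ↦ F k Y) X := by
  induction l with
  | nil => exact .id
  | cons k l ih =>
    simp only [List.forall_mem_cons] at hF hcomm
    exact (ih hF.2 fun j hj ↦ (hcomm.2 j hj).2).comp hF.1
      (commute_foldl hcomm.1.2).symm

section Comparability

variable [Preorder α] {U : Set ι} {G H : (ι → α) → ι → α} {X : ι → α}

theorem le_comp_of_eqOn_bot [OrderBot α] (hG : IsBlockUpdate U G) (hH : IsBlockUpdate Uᶜ H)
    (hX : X ∈ range (H ∘ G)) (hbot : EqOn X ⊥ U) : X ≤ (H ∘ G) X := by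
  have hle : X ≤ G X :=
    le_of_eqOn_compl (hG.eqOn_compl X).symm fun i hi ↦ (hbot hi).trans_le bot_le
  calc
    X = H X := (hH.apply_eq_of_mem_range (range_comp_subset_range G H hX)).symm
    _ ≤ H (G X) := hH.monotone hle

theorem comp_le_of_eqOn_top [OrderTop α] (hG : IsBlockUpdate U G) (hH : IsBlockUpdate Uᶜ H)
    (hX : X ∈ range (H ∘ G)) (htop : EqOn X ⊤ U) : (H ∘ G) X ≤ X :=
  le_comp_of_eqOn_bot (α := αᵒᵈ) hG.dual hH.dual hX htop

-- If `X = H (G Y)`, then `X` and `G Y` agree on `U`, so `X ≤ G Y`; apply `H ∘ G`.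
theorem comp_le_of_eqOn_compl_bot [OrderBot α] (hG : IsBlockUpdate U G)
    (hH : IsBlockUpdate Uᶜ H) (hX : X ∈ range (H ∘ G)) (hbot : EqOn X ⊥ Uᶜ) :
    (H ∘ G) X ≤ X := by
  obtain ⟨Y, hY⟩ := hX
  have hle : X ≤ G Y :=
    le_of_eqOn_compl (hY ▸ hH.eqOn_compl (G Y)) fun i hi ↦ (hbot hi).trans_le bot_le
  calc
    H (G X) ≤ H (G (G Y)) := hH.monotone (hG.monotone hle)
    _ = H (G Y) := by rw [hG.idem]
    _ = X := hY

theorem le_comp_of_eqOn_compl_top [OrderTop α] (hG : IsBlockUpdate U G)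
    (hH : IsBlockUpdate Uᶜ H) (hX : X ∈ range (H ∘ G)) (htop : EqOn X ⊤ Uᶜ) :
    X ≤ (H ∘ G) X :=
  comp_le_of_eqOn_compl_bot (α := αᵒᵈ) hG.dual hH.dual hX htop

end Comparability

/-- The states that are constantly `⊥` or constantly `⊤` on the block `U`. -/
def extremeOn (α : Type*) [LE α] [BoundedOrder α] (U : Set ι) : Set (ι → α) :=
  {X | EqOn X ⊥ U ∨ EqOn X ⊤ U}

theorem ncard_prod_univ_union_univ_prod {β γ : Type*} [Finite β] [Finite γ] (s : Set β)
    (t : Set γ) :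
    (s ×ˢ univ ∪ univ ×ˢ t).ncard + s.ncard * t.ncard =
      s.ncard * Nat.card γ + Nat.card β * t.ncard := by
  have hinter : s ×ˢ univ ∩ univ ×ˢ t = s ×ˢ t := by
    rw [prod_inter_prod, inter_univ, univ_inter]
  simpa only [hinter, ncard_prod, ncard_univ] using
    ncard_union_add_ncard_inter (s ×ˢ (univ : Set γ)) ((univ : Set β) ×ˢ t)

theorem ncard_extremeOn_union_extremeOn_compl [Finite ι] [Finite α] [PartialOrder α]
    [BoundedOrder α] [Nontrivial α] {U : Set ι} (hU : U.Nonempty) (hUc : Uᶜ.Nonempty) :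
    (extremeOn α U ∪ extremeOn α Uᶜ).ncard + 4 =
      2 * Nat.card α ^ Uᶜ.ncard + 2 * Nat.card α ^ U.ncard := by
  classical
  have := hU.to_subtype
  have := hUc.to_subtype
  let e : (ι → α) ≃ (U → α) × ((Uᶜ : Set ι) → α) := Equiv.piEquivPiSubtypeProd (· ∈ U) fun _ ↦ α
  have he : extremeOn α U ∪ extremeOn α Uᶜ = e ⁻¹' ({⊥, ⊤} ×ˢ univ ∪ univ ×ˢ {⊥, ⊤}) := by
    ext X
    have hfst (c : ι → α) : EqOn X c U ↔ (e X).1 = U.domRestrict c :=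
      domRestrict_eq_domRestrict_iff.symm
    have hsnd (c : ι → α) : EqOn X c Uᶜ ↔ (e X).2 = Uᶜ.domRestrict c :=
      domRestrict_eq_domRestrict_iff.symm
    simp only [extremeOn, mem_union, mem_ofPred_eq, hfst, hsnd, mem_preimage, mem_prod, mem_univ,
      and_true, true_and, mem_insert_iff, mem_singleton_iff]
    rfl
  rw [he, ncard_preimage_of_injective_subset_range e.injective (by simp [e.range_eq_univ])]
  simpa [ncard_pair bot_ne_top, Nat.card_fun, mul_comm] using
    ncard_prod_univ_union_univ_prod ({⊥, ⊤} : Set (U → α)) ({⊥, ⊤} : Set ((Uᶜ : Set ι) → α))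

section GardenOfEden

variable [Finite ι] [Finite α] [PartialOrder α] [BoundedOrder α] {U : Set ι}
  {G H : (ι → α) → ι → α}

theorem extremeOn_union_extremeOn_compl_subset (hG : IsBlockUpdate U G)
    (hH : IsBlockUpdate Uᶜ H) :
    extremeOn α U ∪ extremeOn α Uᶜ ⊆
      {X | X ∉ range (H ∘ G) ∨ ∃ k : ℕ, IsFixedPt (H ∘ G) ((H ∘ G)^[k] X)} := by
  intro X hX
  refine or_iff_not_imp_left.2 fun hrange ↦ ?_
  rw [not_not] at hrange
  have hmono : Monotone (H ∘ G) := hH.monotone.comp hG.monotone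
  obtain (hbot | htop) | (hbot | htop) := hX
  · exact exists_isFixedPt_iterate_of_le_map hmono (le_comp_of_eqOn_bot hG hH hrange hbot)
  · exact exists_isFixedPt_iterate_of_map_le hmono (comp_le_of_eqOn_top hG hH hrange htop)
  · exact exists_isFixedPt_iterate_of_map_le hmono (comp_le_of_eqOn_compl_bot hG hH hrange hbot)
  · exact exists_isFixedPt_iterate_of_le_map hmono (le_comp_of_eqOn_compl_top hG hH hrange htop)

theorem le_ncard_notMem_range_or_isFixedPt_iterate [Nontrivial α] (hU : U.Nonempty)
    (hUc : Uᶜ.Nonempty) (hG : IsBlockUpdate U G) (hH : IsBlockUpdate Uᶜ H) :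
    2 * Nat.card α ^ U.ncard + 2 * Nat.card α ^ Uᶜ.ncard - 4 ≤
      {X | X ∉ range (H ∘ G) ∨ ∃ k : ℕ, IsFixedPt (H ∘ G) ((H ∘ G)^[k] X)}.ncard := by
  have hcount := ncard_extremeOn_union_extremeOn_compl (α := α) hU hUc
  have hle := ncard_le_ncard (extremeOn_union_extremeOn_compl_subset hG hH)
  lia

end GardenOfEden

theorem finRange_add (a b : ℕ) :
    List.finRange (a + b) =
      (List.finRange a).map (Fin.castAdd b) ++ (List.finRange b).map (Fin.natAdd a) := by
  simp only [List.finRange, List.ofFn_add, List.map_ofFn]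
  rfl

theorem seqComp_refl_eq_comp {a b : ℕ}
    (F : Fin (a + b) → (Fin (a + b) → Bool) → Fin (a + b) → Bool) :
    seqComp F (Equiv.refl _) =
      (fun X ↦ ((List.finRange b).map (Fin.natAdd a)).foldl (fun Y i ↦ F i Y) X) ∘
        fun X ↦ ((List.finRange a).map (Fin.castAdd b)).foldl (fun Y i ↦ F i Y) X := by
  funext X
  simp only [seqComp, Equiv.refl_apply, finRange_add, List.foldl_append, comp_apply]

theorem ncard_setOf_val_lt (a b : ℕ) : {i : Fin (a + b) | i.val < a}.ncard = a := by
  simp [ncard_eq_toFinset_card', Fin.card_filter_val_lt]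

theorem ncard_compl_setOf_val_lt (a b : ℕ) : {i : Fin (a + b) | i.val < a}ᶜ.ncard = b := by
  rw [ncard_compl, ncard_setOf_val_lt, Nat.card_fin, Nat.add_sub_cancel_left]

theorem stmt_15 {a b : ℕ} (ha : 1 ≤ a) (hb : 1 ≤ b)
    (F : Fin (a + b) → (Fin (a + b) → Bool) → (Fin (a + b) → Bool))
    (hupd : ∀ (i : Fin (a + b)) (X : Fin (a + b) → Bool) (j : Fin (a + b)),
      j ≠ i → F i X j = X j)
    (hmono : ∀ i : Fin (a + b), Monotone (F i))
    (hcomm : ∀ i j : Fin (a + b),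
      ((i.val < a ∧ j.val < a) ∨ (a ≤ i.val ∧ a ≤ j.val)) → F i ∘ F j = F j ∘ F i) :
    2 ^ (a + 1) + 2 ^ (b + 1) - 4 ≤
      ({X : Fin (a + b) → Bool |
        X ∉ Set.range (seqComp F (Equiv.refl (Fin (a + b)))) ∨
        ∃ k : ℕ, seqComp F (Equiv.refl (Fin (a + b)))
            ((seqComp F (Equiv.refl (Fin (a + b))))^[k] X) =
          (seqComp F (Equiv.refl (Fin (a + b))))^[k] X}).ncard := by
  let U : Set (Fin (a + b)) := {i | i.val < a}
  have hU : U.Nonempty := ⟨Fin.castAdd b ⟨0, ha⟩, ha⟩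
  have hUc : Uᶜ.Nonempty := ⟨Fin.natAdd a ⟨0, hb⟩, (Nat.le_add_right a 0).not_gt⟩
  have hF (i) : IsBlockUpdate {i} (F i) :=
    .of_monotone_of_eqOn_compl_singleton (hmono i) fun X j hj ↦ hupd i X j hj
  have hmemU : ∀ i ∈ (List.finRange a).map (Fin.castAdd b), i ∈ U := by simp [U]
  have hmemUc : ∀ i ∈ (List.finRange b).map (Fin.natAdd a), i ∈ Uᶜ := by simp [U]
  have hG := IsBlockUpdate.foldl (fun i hi ↦ (hF i).mono (singleton_subset_iff.2 (hmemU i hi)))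
    fun i hi j hj ↦ congrFun (hcomm i j (.inl ⟨hmemU i hi, hmemU j hj⟩))
  have hH := IsBlockUpdate.foldl (fun i hi ↦ (hF i).mono (singleton_subset_iff.2 (hmemUc i hi)))
    fun i hi j hj ↦ congrFun
      (hcomm i j (.inr ⟨not_lt.1 (hmemUc i hi), not_lt.1 (hmemUc j hj)⟩))
  have hcount := le_ncard_notMem_range_or_isFixedPt_iterate hU hUc hG hH
  rw [← seqComp_refl_eq_comp, ncard_setOf_val_lt, ncard_compl_setOf_val_lt] at hcount
  simpa only [pow_succ', Nat.card_eq_fintype_card, Fintype.card_bool, IsFixedPt] using hcount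
end
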